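/- arXiv:1411.7121 — 2 statements merged into one kernel-verified Lean document; each statement's English description precedes it below -/
import Mathlib

section
/- Let M, M_g, K_g be positive integers with K_g ≤ M_g ≤ M, let V_g ∈ ℂ^{M×M_g} have orthonormal columns (V_g^H V_g = I), let R_g ∈ ℂ^{M×M} be Hermitian positive semidefinite with largest eigenvalue λ_g, and let Ũ ∈ ℂ^{M_g×(M_g−K_g+1)} have orthonormal columns. Then Tr(Ũ^H V_g^H R_g V_g Ũ) ≥ Tr(V_g^H R_g V_g) − (K_g − 1) λ_g, where both traces are nonnegative real numbers. -/
open Matrix ComplexOrder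

/-!
Write `P = 1 - U Uᴴ`, the orthogonal projection onto the complement of the column space of `U`;
its trace is `Mg - (Mg - Kg + 1) = Kg - 1`. The trace lost by compressing `Vᴴ R V` to the columns
of `U` is `Tr(P Vᴴ R V P)`. Since `R ≤ lam • 1` (`posSemidef_smul_one_sub`) and `Vᴴ V = 1`, this
loss is at most `lam * Tr P = (Kg - 1) * lam`.
-/

/-- A Hermitian matrix is bounded above, in the Loewner order, by any upper bound of its
eigenvalues: diagonalizing turns `c • 1 - R` into a nonnegative diagonal matrix. -/
lemma posSemidef_smul_one_sub {n : Type*} [Fintype n] [DecidableEq n] {R : Matrix n n ℂ}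
    (hR : R.IsHermitian) {c : ℝ} (hc : ∀ i, hR.eigenvalues i ≤ c) :
    ((c : ℂ) • (1 : Matrix n n ℂ) - R).PosSemidef := by
  have hD : (diagonal fun i => (c : ℂ) - (hR.eigenvalues i : ℂ)).PosSemidef := by
    refine PosSemidef.diagonal fun i => ?_
    rw [Pi.zero_apply, ← Complex.ofReal_sub]
    exact Complex.zero_le_real.mpr (sub_nonneg.mpr (hc i))
  have hQ : (hR.eigenvectorUnitary : Matrix n n ℂ) * (hR.eigenvectorUnitary : Matrix n n ℂ)ᴴ = 1 :=
    Unitary.mul_star_self_of_mem hR.eigenvectorUnitary.2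
  have hS := hR.spectral_theorem
  rw [Unitary.conjStarAlgAut_apply, star_eq_conjTranspose] at hS
  have h := hD.mul_mul_conjTranspose_same (hR.eigenvectorUnitary : Matrix n n ℂ)
  convert h using 1
  have hsplit : (diagonal fun i => (c : ℂ) - (hR.eigenvalues i : ℂ)) =
      (c : ℂ) • (1 : Matrix n n ℂ) - diagonal (RCLike.ofReal ∘ hR.eigenvalues) := by
    rw [smul_one_eq_diagonal, diagonal_sub]
    rfl
  rw [hsplit, Matrix.mul_sub, Matrix.sub_mul, ← hS, Matrix.mul_smul, Matrix.mul_one,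
    Matrix.smul_mul, hQ]

/-- Lemma 4: with `V` having orthonormal columns, `R` Hermitian positive
semidefinite with largest eigenvalue `lam`, and `Ũ` having orthonormal columns,
`Tr(Ũᴴ Vᴴ R V Ũ) ≥ Tr(Vᴴ R V) − (K_g − 1) lam`. -/
theorem stmt3 (M Mg Kg : ℕ) (hM : 0 < M) (hMg : 0 < Mg) (hKg : 0 < Kg)
    (hKM : Kg ≤ Mg) (hMgM : Mg ≤ M)
    (V : Matrix (Fin M) (Fin Mg) ℂ) (hV : Vᴴ * V = 1)
    (R : Matrix (Fin M) (Fin M) ℂ) (hR : R.PosSemidef)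
    (lam : ℝ) (hlam : IsGreatest (Set.range hR.1.eigenvalues) lam)
    (U : Matrix (Fin Mg) (Fin (Mg - Kg + 1)) ℂ) (hU : Uᴴ * U = 1) :
    ((Uᴴ * Vᴴ * R * V * U).trace).re ≥
      ((Vᴴ * R * V).trace).re - ((Kg : ℝ) - 1) * lam := by
  have hS := posSemidef_smul_one_sub hR.1 fun i => hlam.2 ⟨i, rfl⟩
  obtain ⟨P, hP⟩ : ∃ P, P = 1 - U * Uᴴ := ⟨_, rfl⟩
  have hPH : Pᴴ = P := by simp [hP]
  have hPP : P * P = P := by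
    have h : U * Uᴴ * (U * Uᴴ) = U * Uᴴ := by
      rw [Matrix.mul_assoc, ← Matrix.mul_assoc Uᴴ, hU, Matrix.one_mul]
    simp [hP, Matrix.mul_sub, Matrix.sub_mul, h]
  have htrP : P.trace = (Kg : ℂ) - 1 := by
    rw [hP, trace_sub, trace_mul_comm, hU, trace_one, trace_one, Fintype.card_fin,
      Fintype.card_fin]
    push_cast [Nat.cast_sub hKM]
    ring
  have hcompress : Vᴴ * ((lam : ℂ) • (1 : Matrix (Fin M) (Fin M) ℂ) - R) * V =
      (lam : ℂ) • (1 : Matrix (Fin Mg) (Fin Mg) ℂ) - Vᴴ * R * V := by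
    rw [Matrix.mul_sub, Matrix.sub_mul, Matrix.mul_smul, Matrix.mul_one, Matrix.smul_mul, hV]
  have hloss : (Vᴴ * R * V * P).trace =
      (Vᴴ * R * V).trace - (Uᴴ * Vᴴ * R * V * U).trace := by
    rw [hP, Matrix.mul_sub, Matrix.mul_one, trace_sub, ← Matrix.mul_assoc, trace_mul_comm _ Uᴴ]
    simp only [Matrix.mul_assoc]
  have h := ((hS.conjTranspose_mul_mul_same V).conjTranspose_mul_mul_same P).trace_nonneg
  -- cyclicity of the trace and `P * P = P` leave a single factor `P`
  rw [hPH, hcompress, trace_mul_comm, ← Matrix.mul_assoc, hPP, trace_mul_comm, Matrix.sub_mul,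
    Matrix.smul_mul, Matrix.one_mul, trace_sub, trace_smul, htrP, hloss] at h
  have hre := (Complex.le_def.mp h).1
  simp at hre
  linarith
end

section
/- Let A, B ∈ ℂ^{n×n} with A Hermitian and B Hermitian positive definite, let m be an integer with 1 ≤ m ≤ n, and for any V ∈ ℂ^{n×m} with orthonormal columns define the trace quotient ρ(V) = Tr(V^H A V) / Tr(V^H B V). Suppose V₀, V₁ ∈ ℂ^{n×m} both have orthonormal columns and V₁ satisfies Tr(V₁^H (A − ρ(V₀) B) V₁) ≥ Tr(V₀^H (A − ρ(V₀) B) V₀); in particular this holds if V₁ maximizes Tr(V^H (A − ρ(V₀) B) V) over all V with orthonormal columns. Then ρ(V₁) ≥ ρ(V₀). -/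
/-!
Write `ρ = ρ(V₀)`. The objective `Tr(Vᴴ (A - ρ B) V) = Tr(Vᴴ A V) - ρ Tr(Vᴴ B V)` vanishes at `V₀`,
so it is nonnegative at `V₁`; dividing by `Tr(V₁ᴴ B V₁)`, which is positive by
`trace_conj_re_pos`, gives `ρ ≤ ρ(V₁)`.
-/

open Matrix ComplexOrder

/-- The trace quotient `Tr(Vᴴ A V) / Tr(Vᴴ B V)`. -/
noncomputable def traceQuotient {n m : ℕ} (A B : Matrix (Fin n) (Fin n) ℂ)
    (V : Matrix (Fin n) (Fin m) ℂ) : ℝ :=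
  ((Vᴴ * A * V).trace).re / ((Vᴴ * B * V).trace).re

/-- Orthonormal columns make `V` injective, so `Vᴴ B V` is again positive definite; its trace is
positive because there is at least one column. -/
lemma trace_conj_re_pos {n m : ℕ} (hm : 1 ≤ m) {B : Matrix (Fin n) (Fin n) ℂ} (hB : B.PosDef)
    {V : Matrix (Fin n) (Fin m) ℂ} (hV : Vᴴ * V = 1) : 0 < ((Vᴴ * B * V).trace).re := by
  have : Nonempty (Fin m) := ⟨⟨0, hm⟩⟩
  have hinj : Function.Injective V.mulVec := fun x y hxy => by
    simpa [hV] using congrArg (Vᴴ *ᵥ ·) hxy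
  exact (Complex.pos_iff.mp (hB.conjTranspose_mul_mul_same hinj).trace_pos).1

lemma trace_conj_sub_smul_re {n m : ℕ} (A B : Matrix (Fin n) (Fin n) ℂ)
    (V : Matrix (Fin n) (Fin m) ℂ) (r : ℝ) :
    ((Vᴴ * (A - (r : ℂ) • B) * V).trace).re =
      ((Vᴴ * A * V).trace).re - r * ((Vᴴ * B * V).trace).re := by
  simp [Matrix.mul_sub, Matrix.sub_mul, Matrix.trace_sub, Matrix.trace_smul]

/-- Single-iteration form of Theorem 2: with `A` Hermitian and `B` positive
definite, if `V₁` does not decrease the trace-difference objective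
`Tr(Vᴴ (A − ρ(V₀) B) V)` relative to `V₀` (in particular, if `V₁` maximizes it
over matrices with orthonormal columns), then `ρ(V₁) ≥ ρ(V₀)`. -/
theorem stmt8 (n m : ℕ) (hm : 1 ≤ m) (hmn : m ≤ n)
    (A B : Matrix (Fin n) (Fin n) ℂ) (hA : A.IsHermitian) (hB : B.PosDef)
    (V₀ V₁ : Matrix (Fin n) (Fin m) ℂ) (hV₀ : V₀ᴴ * V₀ = 1) (hV₁ : V₁ᴴ * V₁ = 1)
    (hstep : ((V₁ᴴ * (A - (traceQuotient A B V₀ : ℂ) • B) * V₁).trace).re ≥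
        ((V₀ᴴ * (A - (traceQuotient A B V₀ : ℂ) • B) * V₀).trace).re) :
    traceQuotient A B V₁ ≥ traceQuotient A B V₀ := by
  have h₀ := trace_conj_re_pos hm hB hV₀
  have h₁ := trace_conj_re_pos hm hB hV₁
  rw [trace_conj_sub_smul_re, trace_conj_sub_smul_re] at hstep
  -- By definition of the quotient, the trace-difference objective vanishes at `V₀`.
  have hzero : traceQuotient A B V₀ * ((V₀ᴴ * B * V₀).trace).re = ((V₀ᴴ * A * V₀).trace).re :=
    div_mul_cancel₀ _ h₀.ne'
  have hle : traceQuotient A B V₀ * ((V₁ᴴ * B * V₁).trace).re ≤ ((V₁ᴴ * A * V₁).trace).re := by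
    linarith
  exact (le_div_iff₀ h₁).mpr hle
end
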